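/- There exist constants K > 0 and n₀ such that for every power of 2 n ≥ n₀ and every even integer c with 4 ≤ c ≤ √n, there exists a randomized one-way protocol with shared randomness (a probability distribution over deterministic protocols) for the Hidden Matching problem HM(n) using c bits of communication such that for every input pair (x, M), the probability over the shared randomness that Bob's output (i,j,v) satisfies v = x_i ⊕ x_j is at least 1/2 + K·c/√n. -/

import Mathlib

open scoped Classical
open Finset

/-- A perfect matching on `Fin n`, represented as a fixed-point-free involution:
the pair `(i, M i)` is matched for every `i`. -/
def Matching (n : ℕ) : Type :=
  {M : Fin n → Fin n // (∀ i, M (M i) = i) ∧ ∀ i, M i ≠ i}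

noncomputable instance (n : ℕ) : Fintype (Matching n) :=
  Subtype.fintype _

/-!
Alice cuts `x` into `2h` blocks of `s` bits each: `h` blocks at fixed positions and `h` blocks at
random positions, with `hs` of order `√n`. For each block she sends the majority of its bits
after masking them with shared random bits; since the sum of `s` random signs has typical size
`√s`, this message bit predicts every single bit of the block with bias of order `1 / √s`.
By a birthday estimate, with constant probability some edge of the matching joins a fixed position
to a random one. Bob then predicts both ends of this edge, the two masks are independent, and the
biases multiply to order `1 / s ≈ h / √n`. If there is no such edge, he tosses a coin.
-/

open scoped BigOperators

section Expect

lemma expect_prod_type {α β : Type*} [Fintype α] [Fintype β] (f : α × β → ℝ) :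
    𝔼 q, f q = 𝔼 a, 𝔼 b, f (a, b) := by
  rw [← univ_product_univ, expect_product]

variable {α V : Type*} [Fintype α] [Fintype V] [DecidableEq α] [DecidableEq V]

lemma expect_ite_forall_mem (S : Finset α) :
    𝔼 p : V → α, (if ∀ v, p v ∈ S then (1 : ℝ) else 0) =
      (#S / Fintype.card α : ℝ) ^ Fintype.card V := by
  have hfilter : univ.filter (fun p : V → α => ∀ v, p v ∈ S) = Fintype.piFinset fun _ => S := by
    ext p
    simp
  rw [Fintype.expect_eq_sum_div_card, sum_boole, hfilter, Fintype.card_piFinset,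
    prod_const, card_univ, Fintype.card_fun]
  push_cast
  exact (div_pow _ _ _).symm

lemma one_sub_exp_le_expect_ite_exists_mem [Nonempty α] (S : Finset α) :
    1 - Real.exp (-(Fintype.card V * #S / Fintype.card α)) ≤
      𝔼 p : V → α, if ∃ v, p v ∈ S then (1 : ℝ) else 0 := by
  have hcard : (Fintype.card α : ℝ) ≠ 0 := by simp
  have hcompl : (#Sᶜ / Fintype.card α : ℝ) = 1 - #S / Fintype.card α := by
    rw [eq_sub_iff_add_eq', ← add_div, div_eq_one_iff_eq hcard]
    exact_mod_cast card_add_card_compl S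
  have hmiss : 𝔼 p : V → α, (if ∃ v, p v ∈ S then (1 : ℝ) else 0) =
      1 - (1 - #S / Fintype.card α : ℝ) ^ Fintype.card V := by
    rw [← hcompl, ← expect_ite_forall_mem, ← Fintype.expect_one (ι := V → α) (M := ℝ),
      ← expect_sub_distrib]
    have hnot (p : V → α) : (∀ v, p v ∈ Sᶜ) ↔ ¬∃ v, p v ∈ S := by simp
    simp only [hnot]
    exact expect_congr rfl fun p _ => by split_ifs <;> simp
  have hexp : (1 - #S / Fintype.card α : ℝ) ^ Fintype.card V ≤
      Real.exp (-(#S / Fintype.card α)) ^ Fintype.card V := by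
    refine pow_le_pow_left₀ ?_ (Real.one_sub_le_exp_neg _) _
    rw [← hcompl]
    positivity
  rw [← Real.exp_nat_mul, mul_neg, ← mul_div_assoc] at hexp
  linarith

end Expect

/-- The encoding `b ↦ (-1)^b` of bits as signs, which turns `xor` into multiplication. -/
noncomputable def boolSign (b : Bool) : ℝ := if b then -1 else 1

lemma boolSign_xor (a b : Bool) : boolSign (xor a b) = boolSign a * boolSign b := by
  cases a <;> cases b <;> simp [boolSign]

lemma expect_boolSign : 𝔼 b, boolSign b = 0 := by
  rw [Fintype.expect_eq_sum_div_card, Fintype.sum_bool]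
  simp [boolSign]

lemma expect_ite_eq_eq_half_add {R : Type*} [Fintype R] [Nonempty R] (f g : R → Bool) :
    𝔼 r, (if f r = g r then (1 : ℝ) else 0) =
      1 / 2 + (𝔼 r, boolSign (f r) * boolSign (g r)) / 2 := by
  have hpoint (a b : Bool) :
      (if a = b then (1 : ℝ) else 0) = 1 / 2 + boolSign a * boolSign b / 2 := by
    cases a <;> cases b <;> norm_num [boolSign]
  simp only [hpoint]
  rw [expect_add_distrib, Fintype.expect_const, expect_div]

section Majority

variable {ι κ : Type*} [Fintype ι] [Fintype κ]

/-- The sum of the signs of a family of bits; for random bits, the endpoint of a simple random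
walk. -/
noncomputable def signSum (y : ι → Bool) : ℝ := ∑ i, boolSign (y i)

/-- The majority value of a family of bits, with ties resolved to `false`. -/
noncomputable def majority (y : ι → Bool) : Bool := decide (signSum y < 0)

lemma boolSign_majority_mul_signSum (y : ι → Bool) :
    boolSign (majority y) * signSum y = |signSum y| := by
  by_cases h : signSum y < 0
  · simp [majority, boolSign, h, abs_of_neg h]
  · simp [majority, boolSign, h, abs_of_nonneg (not_lt.mp h)]

lemma signSum_comp_equiv (e : ι ≃ κ) (y : κ → Bool) : signSum (y ∘ e) = signSum y :=
  e.sum_comp fun k => boolSign (y k)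

variable [DecidableEq ι] [DecidableEq κ]

lemma expect_signSum_congr (e : ι ≃ κ) (F : ℝ → ℝ) :
    𝔼 y : ι → Bool, F (signSum y) = 𝔼 y : κ → Bool, F (signSum y) :=
  (Fintype.expect_equiv (e.symm.arrowCongr (Equiv.refl Bool)) _ _ fun y =>
    congrArg F (signSum_comp_equiv e y).symm).symm

lemma expect_signSum_fin_succ (s : ℕ) (F : ℝ → ℝ) :
    𝔼 y : Fin (s + 1) → Bool, F (signSum y) =
      𝔼 y : Fin s → Bool, (F (signSum y + 1) + F (signSum y - 1)) / 2 := by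
  have hcons (b : Bool) (y : Fin s → Bool) :
      signSum (Fin.consEquiv (fun _ => Bool) (b, y)) = boolSign b + signSum y := by
    simp [signSum, Fin.consEquiv, Fin.sum_univ_succ]
  rw [← Fintype.expect_equiv (Fin.consEquiv fun _ => Bool) _ _ fun _ => rfl, expect_prod_type,
    expect_comm]
  refine expect_congr rfl fun y _ => ?_
  rw [Fintype.expect_eq_sum_div_card, Fintype.sum_bool, hcons, hcons]
  simp [boolSign, add_comm, sub_eq_add_neg]

lemma expect_signSum_sq : 𝔼 y : ι → Bool, signSum y ^ 2 = Fintype.card ι := by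
  rw [expect_signSum_congr (Fintype.equivFin ι) (· ^ 2)]
  induction Fintype.card ι with
  | zero => simp [signSum]
  | succ s ih =>
    have hstep (z : ℝ) : ((z + 1) ^ 2 + (z - 1) ^ 2) / 2 = z ^ 2 + 1 := by ring
    rw [expect_signSum_fin_succ s (· ^ 2)]
    simp only [hstep]
    rw [expect_add_distrib, ih, Fintype.expect_one, Nat.cast_succ]

lemma expect_signSum_pow_four :
    𝔼 y : ι → Bool, signSum y ^ 4 = 3 * (Fintype.card ι : ℝ) ^ 2 - 2 * Fintype.card ι := by
  rw [expect_signSum_congr (Fintype.equivFin ι) (· ^ 4)]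
  induction Fintype.card ι with
  | zero => simp [signSum]
  | succ s ih =>
    have hstep (z : ℝ) : ((z + 1) ^ 4 + (z - 1) ^ 4) / 2 = z ^ 4 + 6 * z ^ 2 + 1 := by ring
    rw [expect_signSum_fin_succ s (· ^ 4)]
    simp only [hstep]
    rw [expect_add_distrib, expect_add_distrib, ← mul_expect, ih, expect_signSum_sq,
      Fintype.expect_one, Fintype.card_fin, Nat.cast_succ]
    ring

lemma nine_mul_sq_sub_pow_four_le (w : ℝ) : 9 * w ^ 2 - w ^ 4 ≤ 18 * |w| := by
  rw [← sq_abs, ← Even.pow_abs (by decide : Even 4)]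
  have hw := abs_nonneg w
  have hfactor : 0 ≤ |w| ^ 3 - 9 * |w| + 18 := by
    nlinarith [mul_nonneg hw (sq_nonneg (|w| - 2)), sq_nonneg (|w| - 2)]
  nlinarith [mul_nonneg hw hfactor]

lemma sqrt_card_div_three_le_expect_abs_signSum :
    √(Fintype.card ι) / 3 ≤ 𝔼 y : ι → Bool, |signSum y| := by
  obtain hι | hι := isEmpty_or_nonempty ι
  · simp [signSum]
  set q := √(Fintype.card ι)
  have hq : 0 < q := Real.sqrt_pos.mpr (by exact_mod_cast Fintype.card_pos)
  have hcard : (Fintype.card ι : ℝ) = q ^ 2 := (Real.sq_sqrt (Nat.cast_nonneg _)).symm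
  -- The polynomial bound replaces Hölder's inequality, which bounds the first moment from below
  -- in terms of the second and the fourth.
  have hmoments : 𝔼 y : ι → Bool, (9 * (signSum y / q) ^ 2 - (signSum y / q) ^ 4) ≤
      𝔼 y : ι → Bool, 18 * |signSum y / q| :=
    expect_le_expect fun y _ => nine_mul_sq_sub_pow_four_le _
  simp only [div_pow, abs_div, abs_of_pos hq] at hmoments
  rw [expect_sub_distrib, ← mul_expect, ← mul_expect, ← expect_div, ← expect_div, ← expect_div,
    expect_signSum_sq, expect_signSum_pow_four, hcard] at hmoments
  have hvalue : 9 * (q ^ 2 / q ^ 2) - (3 * (q ^ 2) ^ 2 - 2 * q ^ 2) / q ^ 4 = 6 + 2 / q ^ 2 := by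
    field_simp
    ring
  have hbias : 1 / 3 ≤ (𝔼 y : ι → Bool, |signSum y|) / q := by
    have : 0 ≤ 2 / q ^ 2 := by positivity
    linarith
  rw [le_div_iff₀ hq] at hbias
  linarith

lemma expect_boolSign_majority_mul_congr (t t' : ι) :
    𝔼 y : ι → Bool, boolSign (majority y) * boolSign (y t) =
      𝔼 y : ι → Bool, boolSign (majority y) * boolSign (y t') := by
  refine Fintype.expect_equiv ((Equiv.swap t t').arrowCongr (Equiv.refl Bool)) _ _ fun y => ?_
  have hmajority : majority (y ∘ Equiv.swap t t') = majority y := by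
    simp only [majority, signSum_comp_equiv]
  simp [Equiv.arrowCongr, hmajority]

lemma card_mul_expect_boolSign_majority_mul (t : ι) :
    Fintype.card ι * 𝔼 y : ι → Bool, boolSign (majority y) * boolSign (y t) =
      𝔼 y : ι → Bool, |signSum y| := by
  calc _ = ∑ t', 𝔼 y : ι → Bool, boolSign (majority y) * boolSign (y t') := by
        simp [fun t' => expect_boolSign_majority_mul_congr t' t]
    _ = 𝔼 y : ι → Bool, boolSign (majority y) * signSum y := by
        simp only [← expect_sum_comm, ← mul_sum, signSum]
    _ = _ := by simp only [boolSign_majority_mul_signSum]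

lemma inv_le_expect_boolSign_majority_mul (t : ι) :
    (3 * √(Fintype.card ι))⁻¹ ≤ 𝔼 y : ι → Bool, boolSign (majority y) * boolSign (y t) := by
  have hcard : (0 : ℝ) < Fintype.card ι := by exact_mod_cast Fintype.card_pos_iff.mpr ⟨t⟩
  refine le_of_mul_le_mul_left ?_ hcard
  rw [card_mul_expect_boolSign_majority_mul]
  refine le_trans (le_of_eq ?_) sqrt_card_div_three_le_expect_abs_signSum
  field_simp
  exact (Real.sq_sqrt hcard.le).symm

/-- The prediction of the bit `z t` from the mask `r` and the single bit
`majority fun t' => xor (z t') (r t')`. -/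
noncomputable def maskedGuess (z r : ι → Bool) (t : ι) : Bool :=
  xor (majority fun t' => xor (z t') (r t')) (r t)

lemma inv_le_expect_boolSign_maskedGuess_mul (z : ι → Bool) (t : ι) :
    (3 * √(Fintype.card ι))⁻¹ ≤
      𝔼 r : ι → Bool, boolSign (maskedGuess z r t) * boolSign (z t) := by
  have hmask : Function.Involutive fun (r : ι → Bool) t' => xor (z t') (r t') := fun r => by
    funext t'
    simp
  refine (inv_le_expect_boolSign_majority_mul t).trans_eq
    (Fintype.expect_equiv hmask.toPerm _ _ fun r => ?_).symm
  simp only [Function.Involutive.coe_toPerm, maskedGuess, boolSign_xor]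
  ring

end Majority

/-- One-way protocols for Hidden Matching on `n` bits, with shared randomness `R` and messages
consisting of bits indexed by `ι`. Bob's output `(i, v)` stands for the edge `{i, M i}` and the
bit `v`. -/
structure Protocol (n : ℕ) (R ι : Type*) where
  message : R → (Fin n → Bool) → ι → Bool
  output : R → (ι → Bool) → Matching n → Fin n × Bool

namespace Protocol

variable {n : ℕ} {Q R ι κ : Type*}

/-- The result `(i, v)` of a run of the protocol. -/
def run (P : Protocol n R ι) (r : R) (x : Fin n → Bool) (M : Matching n) : Fin n × Bool :=
  P.output r (P.message r x) M

/-- The probability of winning on the input `(x, M)` when the randomness is uniform on `R`. -/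
noncomputable def winProb [Fintype R] (P : Protocol n R ι) (x : Fin n → Bool) (M : Matching n) :
    ℝ :=
  𝔼 r, if (P.run r x M).2 = xor (x (P.run r x M).1) (x (M.1 (P.run r x M).1)) then 1 else 0

lemma winProb_eq_half_add [Fintype R] [Nonempty R] (P : Protocol n R ι) (x : Fin n → Bool)
    (M : Matching n) :
    P.winProb x M = 1 / 2 + (𝔼 r, boolSign (P.run r x M).2 *
      (boolSign (x (P.run r x M).1) * boolSign (x (M.1 (P.run r x M).1)))) / 2 := by
  simp only [winProb, expect_ite_eq_eq_half_add, boolSign_xor]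

/-- The protocol that uses further shared randomness `Q` to choose one of the protocols `P q`. -/
def mix (P : Q → Protocol n R ι) : Protocol n (Q × R) ι where
  message r := (P r.1).message r.2
  output r := (P r.1).output r.2

lemma winProb_mix [Fintype Q] [Fintype R] (P : Q → Protocol n R ι) (x : Fin n → Bool)
    (M : Matching n) : (mix P).winProb x M = 𝔼 q, (P q).winProb x M :=
  expect_prod_type _

/-- The protocol that sends each bit `i` of the message at position `f i` and fills the remaining
positions with `false`. -/
noncomputable def pad (P : Protocol n R ι) (f : ι ↪ κ) : Protocol n R κ where
  message r x := Function.extend f (P.message r x) fun _ => false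
  output r m := P.output r (m ∘ f)

lemma winProb_pad [Fintype R] (P : Protocol n R ι) (f : ι ↪ κ) (x : Fin n → Bool)
    (M : Matching n) : (P.pad f).winProb x M = P.winProb x M := by
  have hrun (r : R) : (P.pad f).run r x M = P.run r x M := by
    simp only [run, pad, Function.extend_comp f.injective]
  simp only [winProb, hrun]

end Protocol

section BlockProtocol

variable {n : ℕ} [NeZero n] {B T : Type*} [Fintype T]

/-- Alice's message consists of the masked majorities of the blocks `fun t => x (e (b, t))`, all
with one mask, and of the blocks `fun t => x (p (b, t))`, with a second mask. Bob predicts the two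
ends of some edge that joins a position in the range of `e` to one in the range of `p`; if there
is none, he outputs the extra coin. -/
noncomputable def blockProtocol (e p : B × T → Fin n) :
    Protocol n (Bool × (T → Bool) × (T → Bool)) (B ⊕ B) where
  message r x := Sum.elim (fun b => majority fun t => xor (x (e (b, t))) (r.2.1 t))
    fun b => majority fun t => xor (x (p (b, t))) (r.2.2 t)
  output r m M :=
    if H : ∃ uv : (B × T) × B × T, M.1 (e uv.1) = p uv.2 then
      (e H.choose.1, xor (xor (m (Sum.inl H.choose.1.1)) (r.2.1 H.choose.1.2))
        (xor (m (Sum.inr H.choose.2.1)) (r.2.2 H.choose.2.2)))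
    else (0, r.1)

variable [DecidableEq T] {e p : B × T → Fin n} {M : Matching n}

lemma winProb_blockProtocol_of_not_exists (H : ¬∃ uv : (B × T) × B × T, M.1 (e uv.1) = p uv.2)
    (x : Fin n → Bool) : (blockProtocol e p).winProb x M = 1 / 2 := by
  have hrun (r) : (blockProtocol e p).run r x M = (0, r.1) := dif_neg H
  simp only [Protocol.winProb_eq_half_add, hrun]
  rw [← expect_mul, expect_prod_type fun r => boolSign r.1]
  simp only [Fintype.expect_const, expect_boolSign]
  ring

lemma le_winProb_blockProtocol_of_exists (H : ∃ uv : (B × T) × B × T, M.1 (e uv.1) = p uv.2)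
    (x : Fin n → Bool) :
    1 / 2 + 1 / (18 * Fintype.card T) ≤ (blockProtocol e p).winProb x M := by
  obtain ⟨⟨⟨b, t⟩, b', t'⟩, hedge, hrun⟩ : ∃ uv : (B × T) × B × T, M.1 (e uv.1) = p uv.2 ∧
      ∀ r, (blockProtocol e p).run r x M =
        (e uv.1, xor (maskedGuess (fun t => x (e (uv.1.1, t))) r.2.1 uv.1.2)
          (maskedGuess (fun t => x (p (uv.2.1, t))) r.2.2 uv.2.2)) :=
    ⟨H.choose, H.choose_spec, fun r => dif_pos H⟩
  set y : T → Bool := fun t => x (e (b, t))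
  set z : T → Bool := fun t => x (p (b', t))
  have hfactor : 𝔼 r, boolSign ((blockProtocol e p).run r x M).2 *
      (boolSign (x ((blockProtocol e p).run r x M).1) *
        boolSign (x (M.1 ((blockProtocol e p).run r x M).1))) =
      (𝔼 r, boolSign (maskedGuess y r t) * boolSign (y t)) *
        𝔼 r, boolSign (maskedGuess z r t') * boolSign (z t') := by
    rw [Fintype.expect_mul_expect]
    simp only [expect_prod_type, hrun, hedge, boolSign_xor, Fintype.expect_const]
    exact expect_congr rfl fun r₁ _ => expect_congr rfl fun r₂ _ => mul_mul_mul_comm _ _ _ _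
  have hbias := mul_le_mul (inv_le_expect_boolSign_maskedGuess_mul y t)
    (inv_le_expect_boolSign_maskedGuess_mul z t') (by positivity)
    ((by positivity : (0 : ℝ) ≤ (3 * √(Fintype.card T))⁻¹).trans
      (inv_le_expect_boolSign_maskedGuess_mul y t))
  have hsquare : (3 * √(Fintype.card T))⁻¹ * (3 * √(Fintype.card T))⁻¹ =
      2 * (1 / (18 * Fintype.card T) : ℝ) := by
    rw [← mul_inv, mul_mul_mul_comm, Real.mul_self_sqrt (Nat.cast_nonneg _)]
    field_simp
    norm_num
  rw [Protocol.winProb_eq_half_add, hfactor]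
  linarith

variable [Fintype B] [DecidableEq B]

lemma le_winProb_mix_blockProtocol (he : Function.Injective e) (x : Fin n → Bool)
    (M : Matching n) :
    1 / 2 + (1 - Real.exp (-((Fintype.card B * Fintype.card T) ^ 2 / n))) /
      (18 * Fintype.card T) ≤ (Protocol.mix (blockProtocol e)).winProb x M := by
  have hM : Function.Injective M.1 := (show Function.Involutive M.1 from M.2.1).injective
  set S : Finset (Fin n) := univ.image (M.1 ∘ e) with hS
  have hcardS : #S = Fintype.card B * Fintype.card T := by
    rw [hS, card_image_of_injective _ (hM.comp he), card_univ, Fintype.card_prod]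
  have hhit : 1 - Real.exp (-((Fintype.card B * Fintype.card T) ^ 2 / n)) ≤
      𝔼 p : B × T → Fin n, if ∃ v, p v ∈ S then (1 : ℝ) else 0 := by
    simpa [hcardS, sq] using one_sub_exp_le_expect_ite_exists_mem (V := B × T) S
  have hpoint (p : B × T → Fin n) :
      1 / 2 + (if ∃ v, p v ∈ S then (1 : ℝ) else 0) / (18 * Fintype.card T) ≤
        (blockProtocol e p).winProb x M := by
    have hiff : (∃ v, p v ∈ S) ↔ ∃ uv : (B × T) × B × T, M.1 (e uv.1) = p uv.2 := by
      simp only [hS, mem_image, mem_univ, true_and, Function.comp_apply, Prod.exists]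
      tauto
    split_ifs with H
    · exact le_winProb_blockProtocol_of_exists (hiff.mp H) x
    · rw [winProb_blockProtocol_of_not_exists (mt hiff.mpr H), zero_div, add_zero]
  calc _ ≤ 1 / 2 + (𝔼 p : B × T → Fin n, if ∃ v, p v ∈ S then (1 : ℝ) else 0) /
        (18 * Fintype.card T) := by gcongr
    _ = 𝔼 p : B × T → Fin n,
        (1 / 2 + (if ∃ v, p v ∈ S then (1 : ℝ) else 0) / (18 * Fintype.card T)) := by
      rw [expect_add_distrib, Fintype.expect_const, expect_div]
    _ ≤ 𝔼 p, (blockProtocol e p).winProb x M := expect_le_expect fun p _ => hpoint p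
    _ = _ := (Protocol.winProb_mix _ x M).symm

end BlockProtocol

lemma exists_block_dimensions {c n : ℕ} (hc : 2 ≤ c) (hcn : c ≤ n.sqrt) :
    ∃ h s : ℕ, 0 < s ∧ h + h ≤ c ∧ h * s ≤ n ∧ n ≤ 4 * (h * s) ^ 2 ∧ c * s ≤ 3 * n.sqrt := by
  have hh : 0 < c / 2 := by omega
  have hs : 0 < n.sqrt / (c / 2) := Nat.div_pos (by omega) hh
  have hle : c / 2 * (n.sqrt / (c / 2)) ≤ n.sqrt := Nat.mul_div_le _ _
  have hlt : n.sqrt < c / 2 * (n.sqrt / (c / 2) + 1) := Nat.lt_mul_div_succ _ hh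
  have hc3 : c ≤ 3 * (c / 2) := by omega
  refine ⟨c / 2, n.sqrt / (c / 2), hs, by omega, hle.trans n.sqrt_le_self, ?_, by nlinarith⟩
  calc n ≤ (n.sqrt + 1) ^ 2 := (Nat.lt_succ_sqrt' n).le
    _ ≤ (2 * (c / 2 * (n.sqrt / (c / 2)))) ^ 2 := Nat.pow_le_pow_left (by nlinarith) 2
    _ = _ := by ring

lemma one_fifth_le_one_sub_exp_neg {a : ℝ} (ha : 1 / 4 ≤ a) : 1 / 5 ≤ 1 - Real.exp (-a) := by
  have hexp : 5 / 4 ≤ Real.exp a := by linarith [Real.add_one_le_exp a]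
  have hinv : (Real.exp a)⁻¹ ≤ (5 / 4)⁻¹ := inv_anti₀ (by norm_num) hexp
  rw [Real.exp_neg]
  linarith

theorem exists_protocol_winProb_ge {n c : ℕ} (hc : 2 ≤ c) (hcn : (c : ℝ) ≤ √n) :
    ∃ (R : Type) (_ : Fintype R) (_ : Nonempty R) (P : Protocol n R (Fin c)),
      ∀ x M, 1 / 2 + 1 / 270 * c / √n ≤ P.winProb x M := by
  have hcn' : c ≤ n.sqrt :=
    Nat.le_sqrt'.mpr (by exact_mod_cast (Real.le_sqrt' (by positivity)).mp hcn)
  obtain ⟨h, s, hs, hhc, hhs, hn, hcs⟩ := exists_block_dimensions hc hcn'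
  have hn0 : 0 < n := Nat.sqrt_pos.mp (by omega)
  have : NeZero n := ⟨hn0.ne'⟩
  obtain ⟨e⟩ : Nonempty (Fin h × Fin s ↪ Fin n) :=
    Function.Embedding.nonempty_of_card_le (by simpa using hhs)
  obtain ⟨f⟩ : Nonempty (Fin h ⊕ Fin h ↪ Fin c) :=
    Function.Embedding.nonempty_of_card_le (by simpa using hhc)
  refine ⟨_, inferInstance, inferInstance, (Protocol.mix (blockProtocol e)).pad f, fun x M => ?_⟩
  have hwin := le_winProb_mix_blockProtocol e.injective x M
  simp only [Fintype.card_fin] at hwin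
  have hhit : 1 / 5 ≤ 1 - Real.exp (-((h * s : ℝ) ^ 2 / n)) := by
    refine one_fifth_le_one_sub_exp_neg ?_
    rw [le_div_iff₀ (by positivity)]
    have : (n : ℝ) ≤ 4 * (h * s) ^ 2 := by exact_mod_cast hn
    linarith
  have hrate : 1 / 270 * c / √n ≤ 1 / 5 / (18 * s) := by
    have hcs' : (c * s : ℝ) ≤ 3 * √n :=
      (by exact_mod_cast hcs : (c * s : ℝ) ≤ 3 * n.sqrt).trans (by
        gcongr; exact Real.nat_sqrt_le_real_sqrt)
    rw [div_le_div_iff₀ (by positivity) (by positivity)]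
    linarith
  rw [Protocol.winProb_pad]
  calc 1 / 2 + 1 / 270 * c / √n ≤ 1 / 2 + 1 / 5 / (18 * s) := by linarith
    _ ≤ 1 / 2 + (1 - Real.exp (-((h * s : ℝ) ^ 2 / n))) / (18 * s) := by gcongr
    _ ≤ _ := hwin

theorem hidden_matching_classical_protocol_general {n c : ℕ} (hc : 2 ≤ c)
    (hcn : (c : ℝ) ≤ √n) :
    ∃ (R : Type) (_ : Fintype R) (w : R → ℝ)
      (μ : R → (Fin n → Bool) → (Fin c → Bool))
      (out : R → (Fin c → Bool) → Matching n → Fin n × Bool),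
      (∀ r, 0 ≤ w r) ∧ (∑ r, w r) = 1 ∧
      ∀ (x : Fin n → Bool) (M : Matching n),
        1 / 2 + 1 / 270 * c / √n ≤
          ∑ r, w r *
            (if (out r (μ r x) M).2
                = xor (x (out r (μ r x) M).1) (x (M.1 (out r (μ r x) M).1))
             then (1 : ℝ) else 0) := by
  obtain ⟨R, _, _, P, hP⟩ := exists_protocol_winProb_ge hc hcn
  refine ⟨R, inferInstance, fun _ => (Fintype.card R : ℝ)⁻¹, P.message, P.output,
    fun _ => by positivity, by simp, fun x M => (hP x M).trans_eq ?_⟩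
  rw [← mul_sum, inv_mul_eq_div, ← Fintype.expect_eq_sum_div_card]
  rfl

/-- There are constants `K > 0` and `n₀` such that for every power of two
`n = 2^k ≥ n₀` and every even `c` with `4 ≤ c ≤ √n` there is a randomized one-way
protocol for Hidden Matching with shared randomness (a finitely supported probability
distribution, with weights `w`, over deterministic protocols `(μ r, out r)`) using `c`
bits of communication, which for EVERY input pair `(x, M)` wins (i.e. Bob's output
`(i, v)` with `j = M i` satisfies `v = x_i ⊕ x_j`) with probability at least
`1/2 + K·c/√n` over the shared randomness. -/
theorem hidden_matching_classical_protocol :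
    ∃ K : ℝ, 0 < K ∧ ∃ n₀ : ℕ,
      ∀ k : ℕ, n₀ ≤ 2 ^ k →
      ∀ c : ℕ, 2 ∣ c → 4 ≤ c → (c : ℝ) ≤ Real.sqrt (2 ^ k) →
      ∃ (R : Type) (_ : Fintype R) (w : R → ℝ)
        (μ : R → (Fin (2 ^ k) → Bool) → (Fin c → Bool))
        (out : R → (Fin c → Bool) → Matching (2 ^ k) → Fin (2 ^ k) × Bool),
        (∀ r, 0 ≤ w r) ∧ (∑ r, w r) = 1 ∧
        ∀ (x : Fin (2 ^ k) → Bool) (M : Matching (2 ^ k)),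
          1 / 2 + K * c / Real.sqrt (2 ^ k) ≤
            ∑ r, w r *
              (if (out r (μ r x) M).2
                  = xor (x (out r (μ r x) M).1) (x (M.1 (out r (μ r x) M).1))
               then (1 : ℝ) else 0) := by
  exact ⟨1 / 270, by norm_num, 0, fun k _ c _ hc hcn => mod_cast
    hidden_matching_classical_protocol_general (n := 2 ^ k) (by omega) (by simpa using hcn)⟩
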